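/- arXiv:2410.01587 — 4 statements merged into one kernel-verified Lean document; each statement's English description precedes it below -/
import Mathlib

section
/- Let λ ∈ ℂ \ {0} with Im(λ) ≥ 0 and λ ≠ i, and let A = J(λ,n) ⊕ J(−λ⁻¹,n), regarded as an element of SL(2n,ℍ). Then there exists an involution g ∈ SL(2n,ℍ) (g² = I₂ₙ) such that gAg⁻¹ = −A⁻¹. -/
set_option maxHeartbeats 1000000

noncomputable section

open Matrix

/-- The embedding of `ℂ` into the real quaternions, onto the subalgebra spanned by `1` and `i`. -/
def C2H (z : ℂ) : Quaternion ℝ := ⟨z.re, z.im, 0, 0⟩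

/-- For a quaternion `q = a + b i + c j + d k`, its first complex coordinate `a + b i`. -/
def qc1 (q : Quaternion ℝ) : ℂ := ⟨q.re, q.imI⟩

/-- For a quaternion `q = a + b i + c j + d k`, its second complex coordinate `c + d i`,
so that `q = qc1 q + (qc2 q) * j`. -/
def qc2 (q : Quaternion ℝ) : ℂ := ⟨q.imJ, q.imK⟩

/-- The embedding `Φ` of quaternionic square matrices into complex matrices of doubled size:
writing `A = A₁ + A₂ · j`, `Φ A` is the block matrix `[[A₁, A₂], [-conj A₂, conj A₁]]`. -/
def Phi {m : Type*} (A : Matrix m m (Quaternion ℝ)) : Matrix (m ⊕ m) (m ⊕ m) ℂ :=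
  Matrix.fromBlocks (A.map qc1) (A.map qc2)
    (-(A.map fun q => (starRingEnd ℂ) (qc2 q))) (A.map fun q => (starRingEnd ℂ) (qc1 q))

/-- The determinant of a quaternionic matrix `A`: the determinant of `Φ A`.
`A ∈ GL(n, ℍ)` means `qdet A ≠ 0`, and `A ∈ SL(n, ℍ)` means `qdet A = 1`. -/
def qdet {m : Type*} [Fintype m] [DecidableEq m] (A : Matrix m m (Quaternion ℝ)) : ℂ :=
  (Phi A).det

/-- The `m × m` Jordan block `J(λ, m)` over `ℂ`: `λ` on the diagonal, `1` on the
superdiagonal, `0` elsewhere. -/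
def jordanC (lam : ℂ) (m : ℕ) : Matrix (Fin m) (Fin m) ℂ :=
  Matrix.of fun i j => if (j : ℕ) = (i : ℕ) then lam else if (j : ℕ) = (i : ℕ) + 1 then 1 else 0

/-- The `m × m` Jordan block `J(λ, m)`, `λ ∈ ℂ`, viewed as a quaternionic matrix. -/
def jordanH (lam : ℂ) (m : ℕ) : Matrix (Fin m) (Fin m) (Quaternion ℝ) :=
  (jordanC lam m).map C2H

/-- Entries of the intertwining matrix. -/
def fX (l : ℂ) : ℕ → ℕ → ℂ
  | 0, 0 => 1
  | 0, _ + 1 => 0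
  | _ + 1, 0 => 0
  | i + 1, j + 1 => l ^ 2 * fX l i j + l * fX l (i + 1) j

theorem fX_lt (l : ℂ) (i j : ℕ) (h : j < i) : fX l i j = 0 := by
  induction j generalizing i with
  | zero => obtain ⟨i, rfl⟩ := Nat.exists_eq_succ_of_ne_zero (by omega : i ≠ 0); simp [fX]
  | succ j ih =>
    obtain ⟨i, rfl⟩ := Nat.exists_eq_succ_of_ne_zero (by omega : i ≠ 0)
    simp only [fX]
    rw [ih i (by omega), ih (i + 1) (by omega)]; simp

theorem fX_diag (l : ℂ) (i : ℕ) : fX l i i = (l ^ 2) ^ i := by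
  induction i with
  | zero => simp [fX]
  | succ i ih => rw [fX, ih, fX_lt l (i + 1) i (by omega)]; ring

theorem jordan_mul (l : ℂ) (n : ℕ) (F : ℕ → ℕ → ℂ) (hF : ∀ j < n, F n j = 0) :
    jordanC l n * Matrix.of (fun i j : Fin n => F i j)
      = Matrix.of (fun i j : Fin n => l * F i j + F (i + 1) j) := by
  ext ⟨i, hi⟩ ⟨j, hj⟩
  simp only [Matrix.mul_apply, jordanC, Matrix.of_apply]
  rw [Fin.sum_univ_eq_sum_range
    (fun k => (if k = i then l else if k = i + 1 then 1 else 0) * F k j) n]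
  have : ∀ k, (if k = i then l else if k = i + 1 then 1 else 0) * F k j
      = (if k = i then l * F k j else 0) + (if k = i + 1 then F k j else 0) := by
    intro k
    by_cases h1 : k = i
    · subst h1; simp
    · simp [h1]
  simp only [this, Finset.sum_add_distrib, Finset.sum_ite_eq', Finset.mem_range, hi, if_true]
  by_cases h : i + 1 < n
  · simp [h]
  · have : i + 1 = n := by omega
    simp [this, hF j hj]

theorem mul_jordan (m : ℂ) (n : ℕ) (F : ℕ → ℕ → ℂ) :
    Matrix.of (fun i j : Fin n => F i j) * jordanC m n
      = Matrix.of (fun i j : Fin n => m * F i j + if (j : ℕ) = 0 then 0 else F i (j - 1)) := by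
  ext ⟨i, hi⟩ ⟨j, hj⟩
  simp only [Matrix.mul_apply, jordanC, Matrix.of_apply]
  rw [Fin.sum_univ_eq_sum_range
    (fun k => F i k * (if j = k then m else if j = k + 1 then 1 else 0)) n]
  rcases j with _ | j
  · have : ∀ k, F i k * (if 0 = k then m else if 0 = k + 1 then 1 else 0)
      = (if k = 0 then m * F i k else 0) := by
      intro k
      by_cases h1 : k = 0
      · subst h1; simp [mul_comm]
      · simp [h1, Ne.symm h1]
    simp only [this, Finset.sum_ite_eq', Finset.mem_range, hj, if_true]
    simp
  · have : ∀ k, F i k * (if j + 1 = k then m else if j + 1 = k + 1 then 1 else 0)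
      = (if k = j + 1 then m * F i k else 0) + (if k = j then F i k else 0) := by
      intro k
      by_cases h1 : k = j + 1
      · subst h1; simp [mul_comm]
      · by_cases h2 : k = j
        · subst h2; simp
        · simp [h1, Ne.symm h1, h2, Ne.symm h2]
    have hj' : j < n := by omega
    simp only [this, Finset.sum_add_distrib, Finset.sum_ite_eq', Finset.mem_range, hj, hj', if_true]
    simp

/-- The intertwining matrix. -/
def Xm (l : ℂ) (n : ℕ) : Matrix (Fin n) (Fin n) ℂ := Matrix.of (fun i j : Fin n => fX l i j)

theorem Xm_det (l : ℂ) (hl : l ≠ 0) (n : ℕ) : IsUnit (Xm l n).det := by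
  rw [Matrix.det_of_isUpperTriangular]
  · simp only [Xm, Matrix.of_apply, fX_diag, isUnit_iff_ne_zero]
    exact Finset.prod_ne_zero_iff.mpr fun i _ => pow_ne_zero _ (pow_ne_zero _ hl)
  · intro i j h
    exact fX_lt l i j h

theorem Xm_rel (l : ℂ) (hl : l ≠ 0) (n : ℕ) :
    jordanC l n * (Xm l n * jordanC (-l⁻¹) n) = -Xm l n := by
  rw [← Matrix.mul_assoc, Xm, jordan_mul l n (fX l) (fun j hj => fX_lt l n j hj),
    mul_jordan (-l⁻¹) n (fun i j => l * fX l i j + fX l (i + 1) j)]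
  ext ⟨i, hi⟩ ⟨j, hj⟩
  simp only [Matrix.of_apply, Matrix.neg_apply]
  rcases j with _ | j
  · simp [fX, hl]
  · simp only [fX, Nat.add_sub_cancel]
    simp
    field_simp
    ring

/-- `C2H` as a ring homomorphism. -/
def C2Hhom : ℂ →+* Quaternion ℝ where
  toFun := C2H
  map_one' := by
    apply Quaternion.ext <;> simp only [Quaternion.re_one, Quaternion.imI_one, Quaternion.imJ_one, Quaternion.imK_one] <;> simp [C2H]
  map_zero' := by
    apply Quaternion.ext <;> simp only [Quaternion.re_zero, Quaternion.imI_zero, Quaternion.imJ_zero, Quaternion.imK_zero] <;> simp [C2H]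
  map_add' x y := by
    apply Quaternion.ext <;> simp only [Quaternion.re_add, Quaternion.imI_add, Quaternion.imJ_add, Quaternion.imK_add] <;> simp [C2H]
  map_mul' x y := by
    apply Quaternion.ext <;> simp only [Quaternion.re_mul, Quaternion.imI_mul, Quaternion.imJ_mul, Quaternion.imK_mul] <;> simp [C2H]

theorem qdet_map {m : Type*} [Fintype m] [DecidableEq m] (G : Matrix m m ℂ) :
    qdet (G.map C2H) = G.det * (starRingEnd ℂ) G.det := by
  have : Phi (G.map C2H) = Matrix.fromBlocks G 0 0 ((starRingEnd ℂ).mapMatrix G) := by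
    ext (i | i) (j | j) <;> simp [Phi, C2H, qc1, qc2, Complex.ext_iff]
  rw [qdet, this, Matrix.det_fromBlocks_zero₂₁, RingHom.map_det]

/-- For `λ ∈ ℂ \\ {0}` with `Im λ ≥ 0` and `λ ≠ i`, there is an involution
`g ∈ SL(2n, ℍ)` with `g A g⁻¹ = -A⁻¹`, where `A = J(λ, n) ⊕ J(-λ⁻¹, n)`. -/
theorem jordan_pair_conj_to_neg_inv_by_involution (n : ℕ)
    (l : ℂ) (hne : l ≠ 0) (hIm : 0 ≤ l.im) (hi : l ≠ Complex.I)
    (A : (Matrix (Fin n ⊕ Fin n) (Fin n ⊕ Fin n) (Quaternion ℝ))ˣ)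
    (hA : A.val = (Matrix.fromBlocks (jordanC l n) 0 0 (jordanC (-l⁻¹) n)).map C2H) :
    ∃ g : (Matrix (Fin n ⊕ Fin n) (Fin n ⊕ Fin n) (Quaternion ℝ))ˣ,
      qdet g.val = 1 ∧ g * g = 1 ∧ g * A * g⁻¹ = -A⁻¹ := by
  set X := Xm l n with hX
  have hd := Xm_det l hne n
  have h1 : X * X⁻¹ = 1 := Matrix.mul_nonsing_inv _ hd
  have h2 : X⁻¹ * X = 1 := Matrix.nonsing_inv_mul _ hd
  have hrel : (X⁻¹ * jordanC l n) * (X * jordanC (-l⁻¹) n) = -1 := by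
    rw [Matrix.mul_assoc, Xm_rel l hne n, Matrix.mul_neg, h2]
  have hrel' : (X * jordanC (-l⁻¹) n) * (X⁻¹ * jordanC l n) = -1 := by
    have : (X⁻¹ * jordanC l n) * -(X * jordanC (-l⁻¹) n) = 1 := by
      rw [Matrix.mul_neg, hrel, neg_neg]
    have := mul_eq_one_comm.mp this
    rw [Matrix.neg_mul] at this
    rw [← this, neg_neg]
  set G : Matrix (Fin n ⊕ Fin n) (Fin n ⊕ Fin n) ℂ := Matrix.fromBlocks 0 X X⁻¹ 0 with hG
  set B := Matrix.fromBlocks (jordanC l n) 0 0 (jordanC (-l⁻¹) n) with hB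
  have hGG : G * G = 1 := by
    simp [hG, Matrix.fromBlocks_multiply, h1, h2]
  have hGB : (G * B) * (G * B) = -1 := by
    simp only [hG, hB, Matrix.fromBlocks_multiply, Matrix.zero_mul, Matrix.mul_zero, zero_add,
      add_zero, hrel, hrel']
    rw [← Matrix.fromBlocks_one, Matrix.fromBlocks_neg]
    simp
  let f := C2Hhom.mapMatrix (m := Fin n ⊕ Fin n)
  have hf : ∀ M, f M = M.map C2H := fun _ => rfl
  have hgg : f G * f G = 1 := by rw [← map_mul, hGG, map_one]
  let g : (Matrix (Fin n ⊕ Fin n) (Fin n ⊕ Fin n) (Quaternion ℝ))ˣ := ⟨f G, f G, hgg, hgg⟩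
  have hg2 : g * g = 1 := Units.ext hgg
  refine ⟨g, ?_, hg2, ?_⟩
  · change qdet (f G) = 1
    rw [hf, qdet_map]
    have hdd : G.det * G.det = 1 := by rw [← Matrix.det_mul, hGG, Matrix.det_one]
    rcases mul_self_eq_one_iff.mp hdd with h | h <;> simp [h]
  · have hginv : g⁻¹ = g := inv_eq_of_mul_eq_one_right hg2
    have hgA : (g * A) * (g * A) = -1 := by
      apply Units.ext
      change (f G * A.val) * (f G * A.val) = -1
      rw [hA, ← hf, ← map_mul, ← map_mul, hGB, map_neg, map_one]
    have h3 : g * A * g * A = -1 := by rw [mul_assoc (g * A)]; exact hgA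
    rw [hginv, eq_mul_inv_of_mul_eq h3, neg_mul, one_mul]
end
end

section
/- Let A ∈ SL(n,ℍ). Then the following are equivalent: (1) there exists g ∈ SL(n,ℍ) with gAg⁻¹ = −A⁻¹; (2) there exists an involution h ∈ SL(n,ℍ) (h² = Iₙ) with hAh⁻¹ = −A⁻¹. -/
set_option maxHeartbeats 1000000

noncomputable section

open Matrix

/-- In a finite-dimensional commutative real algebra, a unit which is positive at all
real points is a square. -/
theorem aux_sq {T : Type*} [CommRing T] [Algebra ℝ T] [Module.Finite ℝ T] (u : T)
    (hu : IsUnit u) (hpos : ∀ φ : T →ₐ[ℝ] ℝ, 0 ≤ φ u) : ∃ x : T, x * x = u := by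
  have : IsArtinianRing T := IsArtinianRing.of_finite ℝ T
  have key : ∀ I : MaximalSpectrum T, ∃ x : T ⧸ I.asIdeal,
      x * x = Ideal.Quotient.mk I.asIdeal u := by
    intro I
    have := I.isMaximal
    let _ : Field (T ⧸ I.asIdeal) := Ideal.Quotient.field I.asIdeal
    have : Module.Finite ℝ (T ⧸ I.asIdeal) :=
      Module.Finite.of_surjective (Ideal.Quotient.mkₐ ℝ I.asIdeal).toLinearMap
        (Ideal.Quotient.mkₐ_surjective ℝ I.asIdeal)
    rcases Real.nonempty_algEquiv_or (T ⧸ I.asIdeal) with ⟨⟨ψ⟩⟩ | ⟨⟨ψ⟩⟩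
    · have h0 := hpos (ψ.toAlgHom.comp (Ideal.Quotient.mkₐ ℝ I.asIdeal))
      refine ⟨ψ.symm (Real.sqrt (ψ (Ideal.Quotient.mk I.asIdeal u))), ?_⟩
      apply ψ.injective
      rw [map_mul, ψ.apply_symm_apply]
      exact Real.mul_self_sqrt h0
    · obtain ⟨z, hz⟩ := IsAlgClosed.exists_pow_nat_eq (ψ (Ideal.Quotient.mk I.asIdeal u))
        (n := 2) (by norm_num)
      refine ⟨ψ.symm z, ?_⟩
      apply ψ.injective
      rw [map_mul, ψ.apply_symm_apply, ← hz, sq]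
  choose y hy using key
  obtain ⟨x0, hx0⟩ := (IsArtinianRing.quotNilradicalEquivPi T).surjective y
  obtain ⟨x, rfl⟩ := Ideal.Quotient.mk_surjective x0
  have hn : x * x - u ∈ nilradical T := by
    rw [← Ideal.Quotient.eq]
    apply (IsArtinianRing.quotNilradicalEquivPi T).injective
    rw [map_mul, map_mul, hx0]
    funext I
    exact hy I
  have hn' : IsNilpotent (x * x - u) := hn
  have hux : IsUnit (x * x) := by
    have := hn'.isUnit_add_right_of_commute hu (Commute.all _ _)
    simpa using this
  have hx : IsUnit x := isUnit_of_mul_isUnit_left hux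
  have h2 : IsUnit (2 : T) := by
    have : IsUnit (algebraMap ℝ T 2) := (IsUnit.mk0 (2 : ℝ) (by norm_num)).map _
    rwa [map_ofNat] at this
  obtain ⟨r, ⟨-, hr⟩, -⟩ := Polynomial.existsUnique_nilpotent_sub_and_aeval_eq_zero
    (P := (Polynomial.X ^ 2 - Polynomial.C u : Polynomial T)) (x := x)
    (by simpa [sq] using hn') (by simpa [Polynomial.derivative_X_pow] using ⟨(one_add_one_eq_two (R := T)).symm ▸ h2, hx⟩)
  refine ⟨r, ?_⟩
  have : r ^ 2 - u = 0 := by simpa using hr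
  rw [← sq]; exact sub_eq_zero.mp this

theorem aux_fitting {T : Type*} [CommRing T] [IsArtinianRing T] (c : T) :
    ∃ e : T, e * e = e ∧ IsNilpotent (c * e) ∧ IsUnit (c * (1 - e) + e) := by
  obtain ⟨n, y, hy⟩ := IsArtinian.exists_pow_succ_smul_dvd c (1 : T)
  simp only [smul_eq_mul, mul_one, Nat.succ_eq_add_one] at hy
  have h1 : ∀ k, c ^ (n + 1) = c ^ (n + 1) * (c * y) ^ k := by
    intro k
    induction k with
    | zero => simp
    | succ k ih =>
      calc c ^ (n + 1) = c ^ n * c := pow_succ _ _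
        _ = c ^ (n + 1) * (c * y) := by rw [← hy]; ring
        _ = (c ^ (n + 1) * (c * y) ^ k) * (c * y) := by rw [← ih]
        _ = _ := by ring
  set f := (c * y) ^ (n + 1) with hf
  have hcf : c ^ (n + 1) * f = c ^ (n + 1) := (h1 (n + 1)).symm
  have hff : f * f = f := by
    calc f * f = (c ^ (n + 1) * f) * y ^ (n + 1) := by rw [hf]; ring
      _ = f := by rw [hcf, hf]; ring
  have hee : (1 - f) * (1 - f) = 1 - f := by linear_combination hff
  refine ⟨1 - f, hee, ⟨n + 1, ?_⟩, ?_⟩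
  · have : (1 - f) ^ (n + 1) = 1 - f := IsIdempotentElem.pow_succ_eq n hee
    rw [mul_pow, this]
    linear_combination -hcf
  · refine IsUnit.of_mul_eq_one (c ^ n * y ^ (n + 1) * f + (1 - f)) ?_
    have h3 : c * (c ^ n * y ^ (n + 1)) = f := by rw [hf]; ring
    clear_value f
    generalize c ^ n * y ^ (n + 1) = d at *
    linear_combination (f * f) * h3 + (f + 2 - c - d) * hff

theorem aux_core {T : Type*} [CommRing T] [Algebra ℝ T] [Module.Finite ℝ T] (b w : T)
    (hw : IsUnit w) : ∃ e r s : T, e * e = e ∧ (b * b + 4) * (r * r) * (1 - e) = 1 - e ∧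
      w * (s * s) * e = e := by
  have : IsArtinianRing T := IsArtinianRing.of_finite ℝ T
  obtain ⟨e, he, hnil, hunit⟩ := aux_fitting (b * b + 4)
  have hφe : ∀ φ : T →ₐ[ℝ] ℝ, φ e = 0 ∨ φ e = 1 := by
    intro φ
    have h := congrArg φ he
    rw [map_mul] at h
    have : φ e * (φ e - 1) = 0 := by linear_combination h
    rcases mul_eq_zero.mp this with h | h
    · exact Or.inl h
    · exact Or.inr (by linarith)
  obtain ⟨r0, hr0⟩ := aux_sq _ hunit (by
    intro φ
    rcases hφe φ with h | h <;> simp only [map_add, map_mul, map_sub, map_one, map_ofNat, h] <;>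
      nlinarith [mul_self_nonneg (φ b)])
  have hne : ∀ φ : T →ₐ[ℝ] ℝ, φ e = 1 → φ b * φ b = -4 := by
    intro φ h
    have h1 := (hnil.map φ).eq_zero
    simp only [map_add, map_mul, map_ofNat, h] at h1
    linarith
  have hφ0 : ∀ φ : T →ₐ[ℝ] ℝ, φ e = 0 := by
    intro φ
    rcases hφe φ with h | h
    · exact h
    · have := hne φ h
      nlinarith [mul_self_nonneg (φ b)]
  have hwu : IsUnit (w * e + (1 - e)) := by
    obtain ⟨w', hw'⟩ := hw.exists_right_inv
    refine IsUnit.of_mul_eq_one (w' * e + (1 - e)) ?_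
    linear_combination (e * e) * hw' + (2 - w - w') * he
  obtain ⟨s0, hs0⟩ := aux_sq _ hwu (by intro φ; simp [hφ0 φ])
  have hr0u : IsUnit r0 := isUnit_of_mul_isUnit_left (hr0 ▸ hunit)
  have hs0u : IsUnit s0 := isUnit_of_mul_isUnit_left (hs0 ▸ hwu)
  obtain ⟨r, hr⟩ := hr0u.exists_right_inv
  obtain ⟨s, hs⟩ := hs0u.exists_right_inv
  refine ⟨e, r, s, he, ?_, ?_⟩
  · have h1 : (b * b + 4) * (1 - e) = (r0 * r0) * (1 - e) := by
      rw [hr0]; linear_combination (-(b * b + 4) + 1) * he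
    calc _ = ((b * b + 4) * (1 - e)) * (r * r) := by ring
      _ = (r0 * r) * (r0 * r) * (1 - e) := by rw [h1]; ring
      _ = _ := by rw [hr]; ring
  · have h1 : w * e = (s0 * s0) * e := by
      rw [hs0]; linear_combination (-w + 1) * he
    calc _ = (w * e) * (s * s) := by ring
      _ = (s0 * s) * (s0 * s) * e := by rw [h1]; ring
      _ = _ := by rw [hs]; ring

theorem aux_final {M : Type*} [Ring M] [Algebra ℝ M] (a a' x x' E R Q : M)
    (haa' : a * a' = 1) (ha'a : a' * a = 1) (hxx' : x * x' = 1) (hx'x : x' * x = 1)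
    (h1 : x * a = -(a' * x)) (h2 : x * a' = -(a * x))
    (h3 : x' * a = -(a' * x')) (h4 : x' * a' = -(a * x'))
    (he : E * E = E)
    (hr : ((a - a') * (a - a') + 4) * (R * R) * (1 - E) = 1 - E)
    (hs : (x * x) * (Q * Q) * E = E)
    (hae : Commute a E) (hxe : Commute x E) (hx'e : Commute x' E)
    (has : Commute a Q) (hxs : Commute x Q)
    (har : Commute a R) (hxr : Commute x R) (hx'r : Commute x' R)
    (hre : Commute R E) (hse : Commute Q E) :
    ∃ k : M, k * k = 1 ∧ k * a = -(a' * k) := by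
  have ha' : ∀ u, Commute a u → Commute a' u := by
    intro u hu
    show a' * u = u * a'
    calc a' * u = a' * (u * a) * a' := by rw [mul_assoc, mul_assoc, haa', mul_one]
      _ = a' * (a * u) * a' := by rw [hu.eq]
      _ = _ := by rw [← mul_assoc, ha'a, one_mul]
  have haa : Commute a a' := by show _ = _; rw [haa', ha'a]
  obtain ⟨f, hf⟩ : ∃ f, f = 1 - E := ⟨_, rfl⟩
  obtain ⟨C, hC⟩ : ∃ C, C = a + a' := ⟨_, rfl⟩
  have hff : f * f = f := by rw [hf, sub_mul, mul_sub, mul_sub, he]; simp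
  have hfE : f * E = 0 := by rw [hf, sub_mul, he, one_mul, sub_self]
  have hEf : E * f = 0 := by rw [hf, mul_sub, he, mul_one, sub_self]
  have haf : Commute a f := hf ▸ (Commute.one_right a).sub_right hae
  have hxf : Commute x f := hf ▸ (Commute.one_right x).sub_right hxe
  have hx'f : Commute x' f := hf ▸ (Commute.one_right x').sub_right hx'e
  have hRf : Commute R f := hf ▸ (Commute.one_right R).sub_right hre
  have hCR : Commute C R := hC ▸ har.add_left (ha' _ har)
  have hCf : Commute C f := hC ▸ haf.add_left (ha' _ haf)
  have hCa : Commute a C := hC ▸ (Commute.refl a).add_right haa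
  have hCC : C * C = (a - a') * (a - a') + 4 := by
    rw [hC]
    simp only [add_mul, mul_add, sub_mul, mul_sub, haa', ha'a]
    have : (4 : M) = 1 + 1 + 1 + 1 := by norm_num
    rw [this]; abel
  have hxC : x * C = -(C * x) := by rw [hC, mul_add, add_mul, h1, h2]; abel
  have hx'C : x' * C = -(C * x') := by rw [hC, mul_add, add_mul, h3, h4]; abel
  obtain ⟨t, ht⟩ : ∃ t, t = C * R * f := ⟨_, rfl⟩
  have htt : t * t = f := by
    have : t * t = C * C * (R * R) * f := by
      calc t * t = C * (R * (f * C)) * R * f := by rw [ht]; simp only [mul_assoc]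
        _ = C * (R * C) * (f * R) * f := by rw [← hCf.eq]; simp only [mul_assoc]
        _ = C * C * R * R * (f * f) := by rw [← hCR.eq, ← hRf.eq]; simp only [mul_assoc]
        _ = _ := by rw [hff]; simp only [mul_assoc]
    rw [this, hCC, hf, hr]
  have htf : t * f = t := by rw [ht, mul_assoc, hff]
  have hft : f * t = t := by
    have : Commute f (C * R * f) := (hCf.symm.mul_right hRf.symm).mul_right (Commute.refl f)
    rw [ht, this.eq, mul_assoc, hff]
  have htE : t * E = 0 := by rw [← htf, mul_assoc, hfE, mul_zero]
  have hEt : E * t = 0 := by rw [← hft, ← mul_assoc, hEf, zero_mul]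
  have hat : Commute a t := ht ▸ (hCa.mul_right har).mul_right haf
  have hxt : x * t = -(t * x) := by
    rw [ht]
    calc x * (C * R * f) = (x * C) * (R * f) := by simp only [mul_assoc]
      _ = -(C * (x * (R * f))) := by rw [hxC]; simp only [neg_mul, mul_assoc]
      _ = _ := by rw [(hxr.mul_right hxf).eq]; simp only [mul_assoc]
  have hx't : x' * t = -(t * x') := by
    rw [ht]
    calc x' * (C * R * f) = (x' * C) * (R * f) := by simp only [mul_assoc]
      _ = -(C * (x' * (R * f))) := by rw [hx'C]; simp only [neg_mul, mul_assoc]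
      _ = _ := by rw [(hx'r.mul_right hx'f).eq]; simp only [mul_assoc]
  obtain ⟨p, hp⟩ : ∃ p, p = (1 / 2 : ℝ) • (f + t) := ⟨_, rfl⟩
  obtain ⟨q, hq⟩ : ∃ q, q = (1 / 2 : ℝ) • (f - t) := ⟨_, rfl⟩
  have hpp : p * p = p := by
    rw [hp, smul_mul_smul_comm, add_mul, mul_add, mul_add, hff, htf, hft, htt]
    module
  have hqq : q * q = q := by
    rw [hq, smul_mul_smul_comm, sub_mul, mul_sub, mul_sub, hff, htf, hft, htt]
    module
  have hpq : p * q = 0 := by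
    rw [hp, hq, smul_mul_smul_comm, add_mul, mul_sub, mul_sub, hff, htf, hft, htt]
    module
  have hqp : q * p = 0 := by
    rw [hp, hq, smul_mul_smul_comm, sub_mul, mul_add, mul_add, hff, htf, hft, htt]
    module
  have hpE : p * E = 0 := by rw [hp, smul_mul_assoc, add_mul, hfE, htE]; simp
  have hqE : q * E = 0 := by rw [hq, smul_mul_assoc, sub_mul, hfE, htE]; simp
  have hEp : E * p = 0 := by rw [hp, mul_smul_comm, mul_add, hEf, hEt]; simp
  have hEq : E * q = 0 := by rw [hq, mul_smul_comm, mul_sub, hEf, hEt]; simp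
  have hsum : p + q + E = 1 := by
    have : p + q = f := by rw [hp, hq]; module
    rw [this, hf]; abel
  have hap : Commute a p := hp ▸ (haf.add_right hat).smul_right _
  have haq : Commute a q := hq ▸ (haf.sub_right hat).smul_right _
  have hxp : x * p = q * x := by
    rw [hp, hq, mul_smul_comm, smul_mul_assoc, mul_add, sub_mul, hxt, hxf.eq]; abel_nf
  have hxq : x * q = p * x := by
    rw [hp, hq, mul_smul_comm, smul_mul_assoc, mul_sub, add_mul, hxt, hxf.eq]; abel_nf
  have hx'q : x' * q = p * x' := by
    rw [hp, hq, mul_smul_comm, smul_mul_assoc, mul_sub, add_mul, hx't, hx'f.eq]; abel_nf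
  have hxQE : x * Q * E = E * (x * Q) := (hxe.mul_left hse).eq
  have e1 : (x * p) * (x * p) = 0 := by
    rw [hxp, mul_assoc, ← mul_assoc x, hxq, mul_assoc, ← mul_assoc q, hqp, zero_mul]
  have e2 : (x * p) * (x' * q) = q := by
    rw [hxp, mul_assoc, ← mul_assoc x, hxx', one_mul, hqq]
  have e3 : (x * p) * (x * Q * E) = 0 := by
    rw [hxQE, mul_assoc, ← mul_assoc p, hpE, zero_mul, mul_zero]
  have e4 : (x' * q) * (x * p) = p := by
    rw [hx'q, mul_assoc, ← mul_assoc x', hx'x, one_mul, hpp]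
  have e5 : (x' * q) * (x' * q) = 0 := by
    nth_rewrite 2 [hx'q]
    rw [mul_assoc, ← mul_assoc q, hqp, zero_mul, mul_zero]
  have e6 : (x' * q) * (x * Q * E) = 0 := by
    rw [hxQE, mul_assoc, ← mul_assoc q, hqE, zero_mul, mul_zero]
  have e7 : (x * Q * E) * (x * p) = 0 := by
    rw [hxp, mul_assoc, ← mul_assoc E, hEq, zero_mul, mul_zero]
  have e8 : (x * Q * E) * (x' * q) = 0 := by
    rw [hx'q, mul_assoc, ← mul_assoc E, hEp, zero_mul, mul_zero]
  have e9 : (x * Q * E) * (x * Q * E) = E := by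
    calc (x * Q * E) * (x * Q * E) = (x * Q) * (E * (x * Q)) * E := by simp only [mul_assoc]
      _ = (x * (Q * x) * Q) * (E * E) := by rw [← hxQE]; simp only [mul_assoc]
      _ = (x * x) * (Q * Q) * E := by rw [← hxs.eq, he]; simp only [mul_assoc]
      _ = E := hs
  refine ⟨x * p + x' * q + x * Q * E, ?_, ?_⟩
  · simp only [add_mul, mul_add, e1, e2, e3, e4, e5, e6, e7, e8, e9]
    rw [← hsum]; abel
  · rw [add_mul, add_mul, mul_assoc x p, ← hap.eq, mul_assoc x' q, ← haq.eq, mul_assoc x Q,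
      mul_assoc x (Q * E), ← (has.mul_right hae).eq, ← mul_assoc x, ← mul_assoc x',
      ← mul_assoc x a, h1, h3]
    simp only [mul_add, neg_add, neg_mul, mul_assoc]

theorem aux_alg {M : Type*} [Ring M] [Algebra ℝ M] [Module.Finite ℝ M] (A g : Mˣ)
    (h : g * A * g⁻¹ = -A⁻¹) : ∃ k : Mˣ, k * k = 1 ∧ k * A * k⁻¹ = -A⁻¹ := by
  obtain ⟨a, a', haa', ha'a⟩ := A
  obtain ⟨x, x', hxx', hx'x⟩ := g
  have h0 : x * a * x' = -a' := congrArg Units.val h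
  clear h
  have h1 : x * a = -(a' * x) := by
    calc x * a = x * a * x' * x := by rw [mul_assoc _ x', hx'x, mul_one]
      _ = _ := by rw [h0, neg_mul]
  have h2 : x * a' = -(a * x) := by
    calc x * a' = a * (a' * x) * a' := by rw [← mul_assoc a, haa', one_mul]
      _ = -(a * (x * a) * a') := by rw [h1]; simp
      _ = _ := by rw [mul_assoc a, mul_assoc x, haa', mul_one]
  have h3 : x' * a = -(a' * x') := by
    calc x' * a = x' * (a * x) * x' := by rw [mul_assoc, mul_assoc, hxx', mul_one]
      _ = - (x' * (x * a') * x') := by rw [h2]; simp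
      _ = _ := by rw [← mul_assoc x', hx'x, one_mul]
  have h4 : x' * a' = -(a * x') := by
    calc x' * a' = x' * (a' * x) * x' := by rw [mul_assoc, mul_assoc, hxx', mul_one]
      _ = - (x' * (x * a) * x') := by rw [h1]; simp
      _ = _ := by rw [← mul_assoc x', hx'x, one_mul]
  have hbx : Commute x (a - a') := by
    show x * (a - a') = (a - a') * x
    rw [mul_sub, sub_mul, h1, h2]; abel
  have hbx' : Commute x' (a - a') := by
    show x' * (a - a') = (a - a') * x'
    rw [mul_sub, sub_mul, h3, h4]; abel
  have hba : Commute a (a - a') := by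
    show a * (a - a') = (a - a') * a
    rw [mul_sub, sub_mul, haa', ha'a]
  have hxxc : Commute x x' := by show _ = _; rw [hxx', hx'x]
  have hax : Commute a (x * x) := by
    show a * (x * x) = (x * x) * a
    rw [mul_assoc x, h1, mul_neg, ← mul_assoc x, h2, ← mul_assoc]; simp [mul_assoc]
  have hax' : Commute a (x' * x') := by
    show a * (x' * x') = (x' * x') * a
    rw [mul_assoc x', h3, mul_neg, ← mul_assoc x', h4, ← mul_assoc]; simp [mul_assoc]
  let S : Set M := {a - a', x * x, x' * x'}
  have hS : ∀ u ∈ S, Commute a u ∧ Commute x u ∧ Commute x' u := by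
    rintro u (rfl | rfl | rfl)
    · exact ⟨hba, hbx, hbx'⟩
    · exact ⟨hax, (Commute.refl x).mul_right (Commute.refl x), hxxc.symm.mul_right hxxc.symm⟩
    · exact ⟨hax', hxxc.mul_right hxxc, (Commute.refl x').mul_right (Commute.refl x')⟩
  have haS : ∀ u ∈ S, Commute (a - a') u := by
    intro u hu
    have : Commute a' u := by
      show a' * u = u * a'
      calc a' * u = a' * (u * a) * a' := by rw [mul_assoc, mul_assoc, haa', mul_one]
        _ = a' * (a * u) * a' := by rw [(hS u hu).1.eq]
        _ = _ := by rw [← mul_assoc, ha'a, one_mul]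
    exact (hS u hu).1.sub_left this
  have hcomm : ∀ u ∈ S, ∀ v ∈ S, u * v = v * u := by
    intro u hu v hv
    have hv' := hS v hv
    rcases hu with rfl | rfl | rfl
    · exact haS v hv
    · exact hv'.2.1.mul_left hv'.2.1
    · exact hv'.2.2.mul_left hv'.2.2
  let T := Algebra.adjoin ℝ S
  let _ : CommRing T := { (inferInstance : Ring T) with
    mul_comm := (Algebra.isMulCommutative_adjoin ℝ hcomm).is_comm.comm }
  have : Module.Finite ℝ T := inferInstanceAs (Module.Finite ℝ (Subalgebra.toSubmodule T))
  have hTc : ∀ t : T, Commute a (t : M) ∧ Commute x (t : M) ∧ Commute x' (t : M) := by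
    intro t
    have hle : T ≤ Subalgebra.centralizer ℝ {a, x, x'} := by
      apply Algebra.adjoin_le
      intro u hu
      have := hS u hu
      rw [SetLike.mem_coe, Subalgebra.mem_centralizer_iff]
      rintro y (rfl | rfl | rfl)
      · exact this.1
      · exact this.2.1
      · exact this.2.2
    have := hle t.2
    rw [Subalgebra.mem_centralizer_iff] at this
    exact ⟨this a (by simp), this x (by simp), this x' (by simp)⟩
  let b : T := ⟨a - a', Algebra.subset_adjoin (by simp [S])⟩
  let w : T := ⟨x * x, Algebra.subset_adjoin (by simp [S])⟩
  let w' : T := ⟨x' * x', Algebra.subset_adjoin (by simp [S])⟩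
  have hww : w * w' = 1 := by
    apply Subtype.ext
    show (x * x) * (x' * x') = 1
    rw [mul_assoc, ← mul_assoc x x', hxx', one_mul, hxx']
  obtain ⟨e, r, s, he, hr, hs⟩ := aux_core b w (IsUnit.of_mul_eq_one _ hww)
  have he' : (e : M) * e = e := congrArg Subtype.val he
  have hr' : ((a - a') * (a - a') + 4) * ((r : M) * r) * (1 - e) = 1 - e :=
    congrArg Subtype.val hr
  have hs' : (x * x) * ((s : M) * s) * e = e := congrArg Subtype.val hs
  have hrs : ∀ t u : T, (t : M) * u = u * t := fun t u => congrArg Subtype.val (mul_comm t u)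
  have hae := (hTc e).1
  have hxe := (hTc e).2.1
  have hx'e := (hTc e).2.2
  have has := (hTc s).1
  have hxs := (hTc s).2.1
  have har := (hTc r).1
  have hxr := (hTc r).2.1
  have hx'r := (hTc r).2.2
  have hre := hrs r e
  have hse := hrs s e
  obtain ⟨k, hk, hka⟩ := aux_final a a' x x' e r s haa' ha'a hxx' hx'x h1 h2 h3 h4 he' hr' hs'
    hae hxe hx'e has hxs har hxr hx'r hre hse
  refine ⟨⟨k, k, hk, hk⟩, Units.ext hk, Units.ext ?_⟩
  show k * a * k = -a'
  rw [hka, neg_mul, mul_assoc, hk, mul_one]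

theorem qc1_mul (p q : Quaternion ℝ) :
    qc1 (p * q) = qc1 p * qc1 q - qc2 p * (starRingEnd ℂ) (qc2 q) := by
  apply Complex.ext <;> simp [qc1, qc2] <;> ring

theorem qc2_mul (p q : Quaternion ℝ) :
    qc2 (p * q) = qc1 p * qc2 q + qc2 p * (starRingEnd ℂ) (qc1 q) := by
  apply Complex.ext <;> simp [qc1, qc2] <;> ring

theorem qc1_sum {ι : Type*} (s : Finset ι) (f : ι → Quaternion ℝ) :
    qc1 (∑ i ∈ s, f i) = ∑ i ∈ s, qc1 (f i) :=
  map_sum (AddMonoidHom.mk' qc1 (fun _ _ => Complex.ext (by simp [qc1]) (by simp [qc1]))) f s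

theorem qc2_sum {ι : Type*} (s : Finset ι) (f : ι → Quaternion ℝ) :
    qc2 (∑ i ∈ s, f i) = ∑ i ∈ s, qc2 (f i) :=
  map_sum (AddMonoidHom.mk' qc2 (fun _ _ => Complex.ext (by simp [qc2]) (by simp [qc2]))) f s

theorem Phi_mul {n : ℕ} (X Y : Matrix (Fin n) (Fin n) (Quaternion ℝ)) :
    Phi (X * Y) = Phi X * Phi Y := by
  rw [Phi, Phi, Phi, Matrix.fromBlocks_multiply]
  congr 1 <;> ext i j <;>
    simp [Matrix.mul_apply, qc1_sum, qc2_sum, qc1_mul, qc2_mul, Finset.sum_add_distrib,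
      Finset.sum_sub_distrib] <;> ring

theorem Phi_one {n : ℕ} : Phi (1 : Matrix (Fin n) (Fin n) (Quaternion ℝ)) = 1 := by
  rw [Phi, ← Matrix.fromBlocks_one]
  have h1 : qc1 1 = 1 := Complex.ext rfl rfl
  have h2 : qc2 1 = 0 := Complex.ext rfl rfl
  have h3 : qc1 0 = 0 := Complex.ext rfl rfl
  have h4 : qc2 0 = 0 := Complex.ext rfl rfl
  congr 1 <;> ext i j <;> by_cases h : i = j <;> simp [Matrix.one_apply, h, h1, h2, h3, h4]

theorem qdet_real {n : ℕ} (X : Matrix (Fin n) (Fin n) (Quaternion ℝ)) :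
    (starRingEnd ℂ) (qdet X) = qdet X := by
  let J : Matrix (Fin n ⊕ Fin n) (Fin n ⊕ Fin n) ℂ := Matrix.fromBlocks 0 1 (-1) 0
  let J' : Matrix (Fin n ⊕ Fin n) (Fin n ⊕ Fin n) ℂ := Matrix.fromBlocks 0 (-1) 1 0
  have hJ : J * J' = 1 := by
    simp [J, J', Matrix.fromBlocks_multiply]
  have h : (starRingEnd ℂ).mapMatrix (Phi X) = J * Phi X * J' := by
    simp only [J, J', Phi, Matrix.fromBlocks_multiply, RingHom.mapMatrix_apply,
      Matrix.fromBlocks_map]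
    congr 1 <;> ext i j <;> simp
  rw [qdet, RingHom.map_det, h, Matrix.det_mul, Matrix.det_mul, mul_right_comm,
    ← Matrix.det_mul, hJ, Matrix.det_one, one_mul]

theorem exists_sq_neg_one {W : Type*} [AddCommGroup W] [Module (Quaternion ℝ) W] :
    ∃ f : W →ₗ[Quaternion ℝ] W, ∀ v, f (f v) = -v := by
  let b := Module.Free.chooseBasis (Quaternion ℝ) W
  let I : Quaternion ℝ := ⟨0, 1, 0, 0⟩
  have hI : I * I = -1 := by
    ext
    · rw [Quaternion.re_mul, Quaternion.re_neg, Quaternion.re_one]; simp [I]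
    · rw [Quaternion.imI_mul, Quaternion.imI_neg, Quaternion.imI_one]; simp [I]
    · rw [Quaternion.imJ_mul, Quaternion.imJ_neg, Quaternion.imJ_one]; simp [I]
    · rw [Quaternion.imK_mul, Quaternion.imK_neg, Quaternion.imK_one]; simp [I]
  let f : W →ₗ[Quaternion ℝ] W := b.constr ℕ (fun i => I • b i)
  have hf : ∀ i, f (b i) = I • b i := fun i => by simp [f]
  refine ⟨f, fun v => ?_⟩
  have : f ∘ₗ f = -LinearMap.id := by
    apply b.ext
    intro i
    simp [hf, smul_smul, hI]
  exact LinearMap.congr_fun this v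

theorem exists_sqrt_invol {n : ℕ} (X : Matrix (Fin n) (Fin n) (Quaternion ℝ))
    (hX : X * X = 1) : ∃ K : Matrix (Fin n) (Fin n) (Quaternion ℝ), K * K = X := by
  let L : (Fin n → Quaternion ℝ) →ₗ[Quaternion ℝ] (Fin n → Quaternion ℝ) :=
    Matrix.toLinearMapRight' X
  have hL : ∀ v, L (L v) = v := by
    intro v
    simp [L, hX]
  let W := LinearMap.ker (L + LinearMap.id)
  obtain ⟨f, hf⟩ := exists_sq_neg_one (W := W)
  have hW : ∀ v : W, L v = -(v : Fin n → Quaternion ℝ) := by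
    intro v
    have := v.2
    rw [LinearMap.mem_ker, LinearMap.add_apply, LinearMap.id_apply] at this
    exact eq_neg_of_add_eq_zero_left this
  let D : (Fin n → Quaternion ℝ) →ₗ[Quaternion ℝ] W :=
    LinearMap.codRestrict W (LinearMap.id - L) (by
      intro v
      rw [LinearMap.mem_ker]
      simp [hL])
  have hD : ∀ v, (D v : Fin n → Quaternion ℝ) = v - L v := fun v => rfl
  let N : (Fin n → Quaternion ℝ) →ₗ[Quaternion ℝ] (Fin n → Quaternion ℝ) :=
    LinearMap.id + L + W.subtype ∘ₗ f ∘ₗ D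
  have hN : ∀ v, N v = v + L v + f (D v) := fun v => rfl
  have hNN : ∀ v, N (N v) = (4 : ℕ) • L v := by
    intro v
    have h1 : D (N v) = (2 : ℕ) • f (D v) := by
      apply Subtype.ext
      rw [hD, hN]
      simp only [map_add, hL, hW, two_nsmul, Submodule.coe_add]
      abel
    rw [hN, h1, map_nsmul, hf, hN]
    simp only [map_add, hL, hW, two_nsmul, Submodule.coe_add, Submodule.coe_neg, hD]
    abel
  let N' := LinearMap.toMatrixRight' N
  have hN' : N' * N' = (4 : ℕ) • X := by
    apply Matrix.toLinearMapRight'.injective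
    rw [Matrix.toLinearMapRight'_mul, map_nsmul]
    have : Matrix.toLinearMapRight' N' = N := LinearEquiv.symm_apply_apply _ _
    rw [this]
    exact LinearMap.ext hNN
  refine ⟨(1 / 2 : ℝ) • N', ?_⟩
  rw [smul_mul_smul_comm, hN']
  module

theorem qdet_invol {n : ℕ} (X : Matrix (Fin n) (Fin n) (Quaternion ℝ))
    (hX : X * X = 1) : qdet X = 1 := by
  obtain ⟨K, hK⟩ := exists_sqrt_invol X hX
  have hm : ∀ Y Z : Matrix (Fin n) (Fin n) (Quaternion ℝ), qdet (Y * Z) = qdet Y * qdet Z := by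
    intro Y Z
    rw [qdet, Phi_mul, Matrix.det_mul]; rfl
  have h1 : qdet X * qdet X = 1 := by
    rw [← hm, hX, qdet, Phi_one, Matrix.det_one]
  have hd := Complex.conj_eq_iff_real.mp (qdet_real K)
  obtain ⟨d, hd⟩ := hd
  have h2 : qdet X = ((d * d : ℝ) : ℂ) := by rw [← hK, hm, hd]; push_cast; rfl
  rw [h2] at h1 ⊢
  have h3 : (d * d) * (d * d) = 1 := by exact_mod_cast h1
  have : d * d = 1 := by nlinarith [mul_self_nonneg d]
  rw [this]; simp

/-- For `A ∈ SL(n, ℍ)`, there is `g ∈ SL(n, ℍ)` with `g A g⁻¹ = -A⁻¹` if and only if there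
is an involution `h ∈ SL(n, ℍ)` with `h A h⁻¹ = -A⁻¹`. -/
theorem conj_to_neg_inv_iff_by_involution (n : ℕ)
    (A : (Matrix (Fin n) (Fin n) (Quaternion ℝ))ˣ) (hA : qdet A.val = 1) :
    (∃ g : (Matrix (Fin n) (Fin n) (Quaternion ℝ))ˣ,
        qdet g.val = 1 ∧ g * A * g⁻¹ = -A⁻¹) ↔
      ∃ h : (Matrix (Fin n) (Fin n) (Quaternion ℝ))ˣ,
        qdet h.val = 1 ∧ h * h = 1 ∧ h * A * h⁻¹ = -A⁻¹ := by
  constructor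
  · rintro ⟨g, -, hg⟩
    obtain ⟨k, hk, hkA⟩ := aux_alg A g hg
    exact ⟨k, qdet_invol k.val (congrArg Units.val hk), hk, hkA⟩
  · rintro ⟨h, h1, -, h2⟩
    exact ⟨h, h1, h2⟩
end
end

section
/- Let A ∈ M(n,ℍ) be the block-diagonal matrix A = diag(A₁, A₂) with A₁ ∈ M(m,ℍ) and A₂ ∈ M(n−m,ℍ), 1 ≤ m < n, and suppose no right eigenvalue of A₁ is similar in ℍ to any right eigenvalue of A₂ (i.e., there are no nonzero vectors v, w and quaternions λ, μ with A₁v = vλ, A₂w = wμ, and λ, μ conjugate in ℍ). If B ∈ M(n,ℍ) satisfies AB = BA, then B = diag(B₁, B₂) is block-diagonal with the same block sizes, and B₁A₁ = A₁B₁ and B₂A₂ = A₂B₂. -/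
/-- The quaternion with the given components. -/
def auxQ (a b c d : ℝ) : Quaternion ℝ := ⟨a, b, c, d⟩

@[simp] theorem auxQ_re (a b c d : ℝ) : (auxQ a b c d).re = a := rfl
@[simp] theorem auxQ_imI (a b c d : ℝ) : (auxQ a b c d).imI = b := rfl
@[simp] theorem auxQ_imJ (a b c d : ℝ) : (auxQ a b c d).imJ = c := rfl
@[simp] theorem auxQ_imK (a b c d : ℝ) : (auxQ a b c d).imK = d := rfl

open Polynomial in
/-- An irreducible factor of the real minimal polynomial with complex root `a + b i` yields a
right eigenvector for the quaternion `a + b i`. -/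
theorem aux_eigvec {n : ℕ} (A : Matrix (Fin n) (Fin n) (Quaternion ℝ)) (q : ℝ[X])
    (hq : Irreducible q) (hd : q ∣ minpoly ℝ A) (z : ℂ) (hz : aeval z q = 0) :
    ∃ v : Fin n → Quaternion ℝ, v ≠ 0 ∧
      A.mulVec v = (fun i => v i * auxQ z.re z.im 0 0) := by
  have hint : IsIntegral ℝ A := IsIntegral.of_finite ℝ A
  obtain ⟨r, hr⟩ := hd
  have hne : minpoly ℝ A ≠ 0 := minpoly.ne_zero hint
  have hr0 : r ≠ 0 := by
    rintro rfl
    simp at hr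
    exact hne hr
  have hrA : aeval A r ≠ 0 := by
    intro h0
    obtain ⟨t, ht⟩ := minpoly.dvd ℝ A h0
    rw [hr] at ht
    apply hq.not_isUnit
    refine IsUnit.of_mul_eq_one t (mul_right_cancel₀ hr0 ?_)
    rw [one_mul]
    conv_rhs => rw [ht]
    ring
  set Q : ℝ[X] := X ^ 2 - C (2 * z.re) * X + C (z.re ^ 2 + z.im ^ 2) with hQ
  have hQz : aeval z Q = 0 := by
    simp only [hQ, map_add, map_sub, map_mul, map_pow, aeval_X, aeval_C]
    apply Complex.ext <;> simp [pow_two] <;> ring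
  have hqQ : q ∣ Q := by
    by_contra hcon
    obtain ⟨s, t, hst⟩ := (hq.coprime_iff_not_dvd).2 hcon
    have := congrArg (aeval z) hst
    simp [hz, hQz] at this
  have hQr : aeval A Q * aeval A r = 0 := by
    obtain ⟨s, hs⟩ := hqQ
    rw [← map_mul, hs, mul_assoc, mul_comm s, ← mul_assoc, ← hr, map_mul, minpoly.aeval, zero_mul]
  obtain ⟨w, hw0, hw⟩ : ∃ w : Fin n → Quaternion ℝ, w ≠ 0 ∧ (aeval A Q).mulVec w = 0 := by
    by_contra! hcon
    apply hrA
    ext1 i j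
    by_contra hij
    apply hcon (fun i => aeval A r i j) (fun h => hij (congrFun h i))
    funext l
    exact congrFun (congrFun hQr l) j
  have hw2 : A.mulVec (A.mulVec w) - (2 * z.re) • A.mulVec w + (z.re ^ 2 + z.im ^ 2) • w = 0 := by
    rw [← hw]
    simp [hQ, pow_two, Matrix.add_mulVec, Matrix.sub_mulVec, Algebra.algebraMap_eq_smul_one,
      Matrix.smul_mulVec, Matrix.mulVec_mulVec]
    module
  have hmul : ∀ (l : Quaternion ℝ) (u : Fin n → Quaternion ℝ),
      A.mulVec (fun i => u i * l) = fun i => A.mulVec u i * l := by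
    intro l u
    funext i
    simp [Matrix.mulVec, dotProduct, Finset.sum_mul, mul_assoc]
  set lam : Quaternion ℝ := auxQ z.re z.im 0 0 with hlam
  set lamb : Quaternion ℝ := auxQ z.re (-z.im) 0 0 with hlamb
  by_cases hu : A.mulVec w - (fun i => w i * lamb) = 0
  · refine ⟨fun i => w i * auxQ 0 0 1 0, ?_, ?_⟩
    · intro h
      apply hw0
      funext i
      have := congrFun h i
      rcases mul_eq_zero.1 this with h | h
      · exact h
      · have := congrArg (fun q : Quaternion ℝ => q.imJ) h
        exact absurd (show (1 : ℝ) = 0 from this) one_ne_zero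
    · rw [hmul, sub_eq_zero.1 hu]
      funext i
      simp only [mul_assoc]
      congr 1
      ext <;> simp [hlam, hlamb]
  · refine ⟨_, hu, ?_⟩
    rw [Matrix.mulVec_sub, hmul]
    funext i
    have h1 := congrFun hw2 i
    simp only [Pi.add_apply, Pi.sub_apply, Pi.smul_apply, Pi.zero_apply] at h1
    have e1 : (2 * z.re) • A.mulVec w i = A.mulVec w i * lam + A.mulVec w i * lamb := by
      rw [← mul_add]
      ext <;> simp [hlam, hlamb] <;> ring
    have e2 : (z.re ^ 2 + z.im ^ 2) • w i = w i * lamb * lam := by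
      rw [mul_assoc]
      ext <;> simp [hlam, hlamb] <;> ring
    rw [e1, e2] at h1
    simp only [Pi.sub_apply, sub_mul]
    rw [← sub_eq_zero, ← h1]
    abel

open Polynomial in
theorem aux_intertwine {m k : ℕ} (A : Matrix (Fin m) (Fin m) (Quaternion ℝ))
    (C : Matrix (Fin k) (Fin k) (Quaternion ℝ)) (Y : Matrix (Fin m) (Fin k) (Quaternion ℝ))
    (h : A * Y = Y * C) (p : ℝ[X]) : aeval A p * Y = Y * aeval C p := by
  induction p using Polynomial.induction_on' with
  | add p q hp hq => simp [Matrix.add_mul, Matrix.mul_add, hp, hq]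
  | monomial j a =>
    have hj : A ^ j * Y = Y * C ^ j := by
      induction j with
      | zero => simp
      | succ j ih => rw [pow_succ, Matrix.mul_assoc, h, ← Matrix.mul_assoc, ih, Matrix.mul_assoc,
          ← pow_succ]
    simp [aeval_monomial, Algebra.algebraMap_eq_smul_one, hj]

open Polynomial in
theorem aux_sylvester {m k : ℕ} (A : Matrix (Fin m) (Fin m) (Quaternion ℝ))
    (C : Matrix (Fin k) (Fin k) (Quaternion ℝ)) (Y : Matrix (Fin m) (Fin k) (Quaternion ℝ))
    (hsep : ∀ (lam : Quaternion ℝ) (v : Fin m → Quaternion ℝ) (w : Fin k → Quaternion ℝ),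
      v ≠ 0 → w ≠ 0 →
      A.mulVec v = (fun i => v i * lam) → C.mulVec w = (fun i => w i * lam) → False)
    (h : A * Y = Y * C) : Y = 0 := by
  by_cases hc : IsCoprime (minpoly ℝ A) (minpoly ℝ C)
  · obtain ⟨s, t, hst⟩ := hc
    have h1 := aux_intertwine A C Y h (t * minpoly ℝ C)
    have h2 := congrArg (aeval A) hst
    rw [map_add, map_mul, minpoly.aeval, mul_zero, zero_add, map_one] at h2
    rw [h2, map_mul, minpoly.aeval, mul_zero, Matrix.one_mul, Matrix.mul_zero] at h1
    exact h1
  · exfalso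
    have hA : minpoly ℝ A ≠ 0 := minpoly.ne_zero (IsIntegral.of_finite ℝ A)
    obtain ⟨q, hq, hqA, hqC⟩ : ∃ q : ℝ[X], Irreducible q ∧ q ∣ minpoly ℝ A ∧ q ∣ minpoly ℝ C := by
      by_contra! hcon
      exact hc (isCoprime_of_irreducible_dvd (fun hh => hA hh.1) hcon)
    obtain ⟨z, hz⟩ := IsAlgClosed.exists_aeval_eq_zero ℂ q hq.degree_pos.ne'
    obtain ⟨v, hv0, hv⟩ := aux_eigvec A q hq hqA z hz
    obtain ⟨w, hw0, hw⟩ := aux_eigvec C q hq hqC z hz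
    exact hsep _ v w hv0 hw0 hv hw

/-- If `A = diag(A₁, A₂)` is block-diagonal over the quaternions and no right eigenvalue of
`A₁` is similar to a right eigenvalue of `A₂`, then any matrix commuting with `A` is
block-diagonal with the same block sizes, the blocks commuting with `A₁` resp. `A₂`. -/
theorem commuting_with_blockDiagonal_is_blockDiagonal (m k : ℕ) (hm : 1 ≤ m) (hk : 1 ≤ k)
    (A1 : Matrix (Fin m) (Fin m) (Quaternion ℝ)) (A2 : Matrix (Fin k) (Fin k) (Quaternion ℝ))
    (hsep : ∀ (lam mu : Quaternion ℝ) (v : Fin m → Quaternion ℝ) (w : Fin k → Quaternion ℝ),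
      v ≠ 0 → w ≠ 0 →
      A1.mulVec v = (fun i => v i * lam) → A2.mulVec w = (fun i => w i * mu) →
      ¬∃ q : Quaternion ℝ, q ≠ 0 ∧ mu = q * lam * q⁻¹)
    (B : Matrix (Fin m ⊕ Fin k) (Fin m ⊕ Fin k) (Quaternion ℝ))
    (hB : Matrix.fromBlocks A1 0 0 A2 * B = B * Matrix.fromBlocks A1 0 0 A2) :
    ∃ (B1 : Matrix (Fin m) (Fin m) (Quaternion ℝ)) (B2 : Matrix (Fin k) (Fin k) (Quaternion ℝ)),
      B = Matrix.fromBlocks B1 0 0 B2 ∧ B1 * A1 = A1 * B1 ∧ B2 * A2 = A2 * B2 := by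
  have hB' := hB
  rw [← Matrix.fromBlocks_toBlocks B, Matrix.fromBlocks_multiply, Matrix.fromBlocks_multiply,
    Matrix.fromBlocks_inj] at hB'
  simp only [Matrix.zero_mul, Matrix.mul_zero, add_zero, zero_add] at hB'
  obtain ⟨h11, h12, h21, h22⟩ := hB'
  have z12 : B.toBlocks₁₂ = 0 := aux_sylvester A1 A2 _
    (fun lam v w hv hw h1 h2 => hsep lam lam v w hv hw h1 h2 ⟨1, one_ne_zero, by simp⟩) h12
  have z21 : B.toBlocks₂₁ = 0 := aux_sylvester A2 A1 _
    (fun lam v w hv hw h1 h2 => hsep lam lam w v hw hv h2 h1 ⟨1, one_ne_zero, by simp⟩) h21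
  refine ⟨B.toBlocks₁₁, B.toBlocks₂₂, ?_, h11.symm, h22.symm⟩
  conv_lhs => rw [← Matrix.fromBlocks_toBlocks B, z12, z21]
end

section
/- For μ ∈ {1, −1} and n ≥ 1, the matrix Ω(μ,n), regarded as an element of SL(n,ℍ), is an involution (Ω(μ,n)² = Iₙ) and satisfies Ω(μ,n) · J(μ,n) · Ω(μ,n)⁻¹ = (J(μ,n))⁻¹; consequently the Jordan block J(μ,n) is strongly reversible in SL(n,ℍ). -/
set_option maxHeartbeats 1000000

noncomputable section

open Matrix

/-- The entries of the matrix `Ω(λ, n)` (with `1`-based indices `i, j ∈ {1, …, n}`):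
`x i j = 0` for `i > j` or `j > n`; `x i n = 0` for `i ≠ n`; `x n n = 1`; and
`x i j = -λ⁻¹ • x (i+1) j - λ⁻² • x (i+1) (j+1)` for `1 ≤ i ≤ j ≤ n - 1`. -/
def omegaAux (lam : ℂ) (n : ℕ) (i j : ℕ) : ℂ :=
  if h1 : j < i ∨ n < j then 0
  else if h2 : j = n then (if i = n then 1 else 0)
  else -lam⁻¹ * omegaAux lam n (i + 1) j - (lam⁻¹) ^ 2 * omegaAux lam n (i + 1) (j + 1)
termination_by n - i
decreasing_by all_goals omega

/-- The upper triangular matrix `Ω(λ, n)`. -/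
def Omega (lam : ℂ) (n : ℕ) : Matrix (Fin n) (Fin n) ℂ :=
  Matrix.of fun i j => omegaAux lam n ((i : ℕ) + 1) ((j : ℕ) + 1)

theorem C2H_re (z : ℂ) : (C2H z).re = z.re := rfl

theorem C2H_imI (z : ℂ) : (C2H z).imI = z.im := rfl

theorem C2H_imJ (z : ℂ) : (C2H z).imJ = 0 := rfl

theorem C2H_imK (z : ℂ) : (C2H z).imK = 0 := rfl

/-- The embedding `C2H` as a ring homomorphism. -/
def C2HHom : ℂ →+* Quaternion ℝ where
  toFun := C2H
  map_one' := rfl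
  map_mul' z w := by apply Quaternion.ext <;> simp [C2H_re, C2H_imI, C2H_imJ, C2H_imK]
  map_zero' := rfl
  map_add' z w := by apply Quaternion.ext <;> simp [C2H_re, C2H_imI, C2H_imJ, C2H_imK]

theorem map_C2H_mul {n : ℕ} (M N : Matrix (Fin n) (Fin n) ℂ) :
    (M * N).map C2H = M.map C2H * N.map C2H :=
  Matrix.map_mul (f := C2HHom)

theorem map_C2H_one {n : ℕ} : (1 : Matrix (Fin n) (Fin n) ℂ).map C2H = 1 :=
  Matrix.map_one C2HHom (map_zero _) (map_one _)

theorem qdet_map_C2H {n : ℕ} (M : Matrix (Fin n) (Fin n) ℂ) (h : M.det * M.det = 1) :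
    qdet (M.map C2H) = 1 := by
  have e : Phi (M.map C2H) = Matrix.fromBlocks M 0 0 (M.map (starRingEnd ℂ)) := by
    unfold Phi
    congr 1
    · ext i j
      simp [qc2, C2H, Complex.ext_iff]
  have hd : (M.map (starRingEnd ℂ)).det = (starRingEnd ℂ) M.det :=
    ((starRingEnd ℂ).map_det M).symm
  rw [qdet, e, Matrix.det_fromBlocks_zero₂₁, hd]
  rcases mul_self_eq_one_iff.mp h with h | h <;> simp [h]

theorem jordan_mul_apply {n : ℕ} (μ : ℂ) (M : Matrix (Fin n) (Fin n) ℂ) (i j : Fin n) :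
    (jordanC μ n * M) i j
      = μ * M i j + if h : (i : ℕ) + 1 < n then M ⟨i + 1, h⟩ j else 0 := by
  have e : ∀ k : Fin n, jordanC μ n i k * M k j
      = (if k = i then μ * M k j else 0) + (if (k : ℕ) = i + 1 then M k j else 0) := by
    intro k
    simp only [jordanC, Matrix.of_apply, Fin.ext_iff]
    split_ifs <;> first | omega | simp
  rw [Matrix.mul_apply, Finset.sum_congr rfl (fun k _ => e k), Finset.sum_add_distrib]
  congr 1
  · simp
  · split_ifs with h
    · rw [Finset.sum_eq_single ⟨i + 1, h⟩]
      · simp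
      · intro b _ hb
        rw [if_neg]
        intro hh
        exact hb (Fin.ext hh)
      · simp
    · apply Finset.sum_eq_zero
      intro k _
      rw [if_neg]
      have := k.2
      omega

theorem mul_jordan_apply_zero {n : ℕ} (μ : ℂ) (M : Matrix (Fin n) (Fin n) ℂ) (i j : Fin n)
    (hj : (j : ℕ) = 0) :
    (M * jordanC μ n) i j = μ * M i j := by
  rw [Matrix.mul_apply, Finset.sum_eq_single j]
  · simp [jordanC, mul_comm]
  · intro b _ hb
    have : (j : ℕ) ≠ b := fun h => hb (Fin.ext h.symm)
    simp [jordanC, this]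
    omega
  · simp

theorem mul_jordan_apply_succ {n : ℕ} (μ : ℂ) (M : Matrix (Fin n) (Fin n) ℂ) (i : Fin n)
    (j : ℕ) (hj : j + 1 < n) :
    (M * jordanC μ n) i ⟨j + 1, hj⟩ = μ * M i ⟨j + 1, hj⟩ + M i ⟨j, by omega⟩ := by
  have e : ∀ k : Fin n, M i k * jordanC μ n k ⟨j + 1, hj⟩
      = (if k = ⟨j + 1, hj⟩ then μ * M i k else 0)
        + (if k = ⟨j, by omega⟩ then M i k else 0) := by
    intro k
    simp only [jordanC, Matrix.of_apply, Fin.ext_iff]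
    split_ifs <;> first | omega | simp [mul_comm]
  rw [Matrix.mul_apply, Finset.sum_congr rfl (fun k _ => e k), Finset.sum_add_distrib]
  simp

theorem omegaAux_zero (μ : ℂ) (n i j : ℕ) (h : j < i) : omegaAux μ n i j = 0 := by
  rw [omegaAux, dif_pos (Or.inl h)]

theorem omegaAux_last (μ : ℂ) (n i : ℕ) : omegaAux μ n i n = if i = n then 1 else 0 := by
  rw [omegaAux]
  split_ifs <;> first | omega | rfl

theorem omegaAux_rec (μ : ℂ) (n i j : ℕ) (h : j < n) (hμ : μ * μ = 1) :
    omegaAux μ n i j = -μ * omegaAux μ n (i + 1) j - omegaAux μ n (i + 1) (j + 1) := by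
  by_cases hij : j < i
  · simp [omegaAux_zero μ n i j hij, omegaAux_zero μ n (i+1) j (by omega),
      omegaAux_zero μ n (i+1) (j+1) (by omega)]
  · have hinv : μ⁻¹ = μ := inv_eq_of_mul_eq_one_left hμ
    rw [omegaAux, dif_neg (by omega), dif_neg (by omega), hinv, pow_two, hμ, one_mul]

theorem jordan_Omega_jordan (n : ℕ) (μ : ℂ) (hμ : μ * μ = 1) :
    jordanC μ n * Omega μ n * jordanC μ n = Omega μ n := by
  have hJ : ∀ i j : Fin n, (jordanC μ n * Omega μ n) i j
      = μ * omegaAux μ n (i + 1) (j + 1) + omegaAux μ n (i + 2) (j + 1) := by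
    intro i j
    rw [jordan_mul_apply]
    split_ifs with h
    · rfl
    · rw [omegaAux_zero μ n (i + 2) (j + 1) (by omega)]
      rfl
  ext i ⟨j, hj⟩
  cases j with
  | zero =>
    rw [mul_jordan_apply_zero _ _ _ _ rfl, hJ, omegaAux_zero μ n (i + 2) _ (by simp)]
    simp only [Omega, Matrix.of_apply]
    linear_combination (omegaAux μ n (i + 1) (0 + 1)) * hμ
  | succ j =>
    rw [mul_jordan_apply_succ, hJ, hJ]
    simp only [Omega, Matrix.of_apply]
    have h := omegaAux_rec μ n (i + 1) (j + 1) hj hμ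
    simp only [add_assoc, Nat.reduceAdd] at h ⊢
    linear_combination (omegaAux μ n (i + 1) (j + 2) - omegaAux μ n (i + 2) (j + 1)) * hμ + μ * h

theorem eq_one_of_commute {n : ℕ} (μ : ℂ) (Y : Matrix (Fin n) (Fin n) ℂ)
    (hc : jordanC μ n * Y = Y * jordanC μ n)
    (hl : ∀ i j : Fin n, (j : ℕ) + 1 = n → Y i j = if i = j then 1 else 0) : Y = 1 := by
  have key : ∀ k : ℕ, ∀ i j : Fin n, (j : ℕ) + k + 1 = n → Y i j = if i = j then 1 else 0 := by
    intro k
    induction k with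
    | zero => exact fun i j h => hl i j h
    | succ k ih =>
      intro i j h
      have hj : (j : ℕ) + 1 < n := by omega
      have h1 := congrFun (congrFun hc i) ⟨j + 1, hj⟩
      rw [jordan_mul_apply, mul_jordan_apply_succ] at h1
      have h2 := (add_left_cancel h1).symm
      rw [Fin.eta] at h2
      rw [h2]
      split_ifs with ha hb hb
      · rw [ih _ _ (by simp; omega)]
        simp [hb]
      · rw [ih _ _ (by simp; omega), if_neg]
        simp only [Fin.ext_iff] at hb ⊢
        omega
      · subst hb
        omega
      · rfl
  ext i j
  rw [Matrix.one_apply]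
  exact key (n - 1 - j) i j (by omega)

theorem Omega_sq (n : ℕ) (μ : ℂ) (hμ : μ * μ = 1) : Omega μ n * Omega μ n = 1 := by
  have h := jordan_Omega_jordan n μ hμ
  have hlast : ∀ i j : Fin n, (j : ℕ) + 1 = n → Omega μ n i j = if i = j then 1 else 0 := by
    intro i j hj
    simp only [Omega, Matrix.of_apply, hj, omegaAux_last, Fin.ext_iff]
    congr 1
    simp only [eq_iff_iff]
    omega
  apply eq_one_of_commute μ
  · calc jordanC μ n * (Omega μ n * Omega μ n)
        = jordanC μ n * Omega μ n * (jordanC μ n * Omega μ n * jordanC μ n) := by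
          rw [h, mul_assoc]
      _ = (jordanC μ n * Omega μ n * jordanC μ n) * Omega μ n * jordanC μ n := by
          simp only [mul_assoc]
      _ = Omega μ n * Omega μ n * jordanC μ n := by rw [h]
  · intro i j hj
    rw [Matrix.mul_apply, Finset.sum_congr rfl (fun k _ => by rw [hlast k j hj])]
    simp [hlast i j hj]

/-- For `μ ∈ {1, -1}` and `n ≥ 1`, the matrix `Ω(μ, n)`, viewed as an element of
`SL(n, ℍ)`, is an involution conjugating `J(μ, n)` to its inverse; consequently `J(μ, n)`
is strongly reversible in `SL(n, ℍ)`. -/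
theorem Omega_involution_reverses_jordan_pm_one (n : ℕ) (hn : 1 ≤ n)
    (μ : ℂ) (hμ : μ = 1 ∨ μ = -1) :
    ∃ g A : (Matrix (Fin n) (Fin n) (Quaternion ℝ))ˣ,
      g.val = (Omega μ n).map C2H ∧ A.val = jordanH μ n ∧
      qdet g.val = 1 ∧ qdet A.val = 1 ∧ g * g = 1 ∧ g * A * g⁻¹ = A⁻¹ := by
  have hm : μ * μ = 1 := by rcases hμ with h | h <;> simp [h]
  have hJ := jordan_Omega_jordan n μ hm
  have hO := Omega_sq n μ hm
  have h1 : jordanC μ n * (Omega μ n * jordanC μ n * Omega μ n) = 1 := by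
    rw [← mul_assoc, ← mul_assoc, hJ, hO]
  have h2 : (Omega μ n * jordanC μ n * Omega μ n) * jordanC μ n = 1 := by
    rw [mul_assoc, mul_assoc, ← mul_assoc (jordanC μ n), hJ, hO]
  have dO : (Omega μ n).det * (Omega μ n).det = 1 := by
    rw [← Matrix.det_mul, hO, Matrix.det_one]
  have dJ : (jordanC μ n).det * (jordanC μ n).det = 1 := by
    have h3 := congrArg Matrix.det h1
    simp only [Matrix.det_mul, Matrix.det_one] at h3
    linear_combination h3 - (jordanC μ n).det * (jordanC μ n).det * dO
  have hOO : (Omega μ n).map C2H * (Omega μ n).map C2H = 1 := by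
    rw [← map_C2H_mul, hO, map_C2H_one]
  refine ⟨⟨(Omega μ n).map C2H, (Omega μ n).map C2H, hOO, hOO⟩,
    ⟨jordanH μ n, (Omega μ n * jordanC μ n * Omega μ n).map C2H, ?_, ?_⟩, rfl, rfl,
    qdet_map_C2H _ dO, qdet_map_C2H _ dJ, ?_, ?_⟩
  · rw [jordanH, ← map_C2H_mul, h1, map_C2H_one]
  · rw [jordanH, ← map_C2H_mul, h2, map_C2H_one]
  · exact Units.ext hOO
  · apply Units.ext
    change (Omega μ n).map C2H * (jordanC μ n).map C2H * (Omega μ n).map C2H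
      = (Omega μ n * jordanC μ n * Omega μ n).map C2H
    rw [map_C2H_mul, map_C2H_mul]
end
end
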